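/- arXiv:2512.06587 — 2 statements merged into one kernel-verified Lean document; each statement's English description precedes it below -/
import Mathlib

section
/- For every integer l ≥ 6 and every integer j with 1 ≤ j ≤ τ − 1, where τ = ⌊l/3⌋, the function d_l(j) = g_l(j) − h_l(j) has strictly positive second-order finite differences: Δ²d_l(j) = d_l(j+1) − 2·d_l(j) + d_l(j−1) > 0. -/
/-- `h_l(j) = (l+j)/(l-j)` as a rational number. -/
def hFn (l j : ℕ) : ℚ := ((l : ℚ) + j) / ((l : ℚ) - j)

/-- `g_l(j) = ((l+j)^(2j))² / ((l+3j)^(2j) · (l−j)^(2j))` as a rational number, where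
`x^(m)` denotes the descending factorial `x(x−1)⋯(x−m+1)`. -/
def gFn (l j : ℕ) : ℚ :=
  ((Nat.descFactorial (l + j) (2 * j) : ℚ)) ^ 2 /
    ((Nat.descFactorial (l + 3 * j) (2 * j) : ℚ) * (Nat.descFactorial (l - j) (2 * j) : ℚ))

/-- `d_l(j) = g_l(j) − h_l(j)`. -/
def dFn (l j : ℕ) : ℚ := gFn l j - hFn l j

open Nat in
lemma gFn_fact (m j : ℕ) : gFn (3 * j + m) j =
    (((4 * j + m)! : ℚ)) ^ 3 * (m ! : ℚ) / ((((2 * j + m)! : ℚ)) ^ 3 * ((6 * j + m)! : ℚ)) := by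
  have h1 := Nat.factorial_mul_descFactorial (n := 4 * j + m) (k := 2 * j) (by omega)
  have h2 := Nat.factorial_mul_descFactorial (n := 6 * j + m) (k := 2 * j) (by omega)
  have h3 := Nat.factorial_mul_descFactorial (n := 2 * j + m) (k := 2 * j) (by omega)
  rw [show 4 * j + m - 2 * j = 2 * j + m by omega] at h1
  rw [show 6 * j + m - 2 * j = 4 * j + m by omega] at h2
  rw [show 2 * j + m - 2 * j = m by omega] at h3
  unfold gFn
  rw [show 3 * j + m + j = 4 * j + m by omega, show 3 * j + m + 3 * j = 6 * j + m by omega,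
    show 3 * j + m - j = 2 * j + m by omega]
  have p2 : ((6 * j + m).descFactorial (2 * j) : ℚ) ≠ 0 := by
    have := Nat.descFactorial_pos (n := 6 * j + m) (k := 2 * j) |>.2 (by omega)
    positivity
  have p3 : ((2 * j + m).descFactorial (2 * j) : ℚ) ≠ 0 := by
    have := Nat.descFactorial_pos (n := 2 * j + m) (k := 2 * j) |>.2 (by omega)
    positivity
  have q1 : ((4 * j + m)! : ℚ) ≠ 0 := by positivity
  have q2 : ((2 * j + m)! : ℚ) ≠ 0 := by positivity
  have q3 : ((6 * j + m)! : ℚ) ≠ 0 := by positivity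
  have e1 : ((2 * j + m)! : ℚ) * ((4 * j + m).descFactorial (2 * j) : ℚ) = ((4 * j + m)! : ℚ) := by
    exact_mod_cast h1
  have e2 : ((4 * j + m)! : ℚ) * ((6 * j + m).descFactorial (2 * j) : ℚ) = ((6 * j + m)! : ℚ) := by
    exact_mod_cast h2
  have e3 : ((m)! : ℚ) * ((2 * j + m).descFactorial (2 * j) : ℚ) = ((2 * j + m)! : ℚ) := by
    exact_mod_cast h3
  rw [div_eq_div_iff (by positivity) (by positivity)]
  generalize ((4 * j + m).descFactorial (2 * j) : ℚ) = a at *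
  generalize ((6 * j + m).descFactorial (2 * j) : ℚ) = b at *
  generalize ((2 * j + m).descFactorial (2 * j) : ℚ) = c at *
  generalize ((4 * j + m)! : ℚ) = A at *
  generalize ((2 * j + m)! : ℚ) = B at *
  generalize ((6 * j + m)! : ℚ) = C at *
  generalize ((m)! : ℚ) = M at *
  rw [← e2, ← e1, ← e3]
  ring

def rN (l j : ℚ) : ℚ := (l + j + 1) ^ 3 * (l - j) ^ 3
def rD (l j : ℚ) : ℚ := (l + 3 * j + 3) * (l + 3 * j + 2) * (l + 3 * j + 1) *
  ((l - 3 * j) * (l - 3 * j - 1) * (l - 3 * j - 2))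

lemma rD_pos (m j : ℕ) : 0 < rD ((3 * j + 3 + m : ℕ) : ℚ) j := by
  unfold rD
  push_cast
  ring_nf
  positivity

lemma rN_pos (m j : ℕ) : 0 < rN ((3 * j + 3 + m : ℕ) : ℚ) j := by
  unfold rN
  push_cast
  ring_nf
  positivity

lemma rD_le (m j : ℕ) : rD ((3 * j + 3 + m : ℕ) : ℚ) j ≤ rN ((3 * j + 3 + m : ℕ) : ℚ) j := by
  rw [← sub_nonneg]
  unfold rN rD
  push_cast
  ring_nf
  positivity

lemma main_poly (m k : ℕ) (l j : ℚ) (hj : j = k + 1) (hl : l = 3 * j + 3 + m) :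
    0 < (rN l j * rD l (j - 1) - rN l (j - 1) * rD l j) * ((l - j) * (l - j - 1) * (l - j + 1))
      - 4 * l * (rD l j * rD l (j - 1)) := by
  subst hl
  subst hj
  unfold rN rD
  ring_nf
  positivity

open Nat in
lemma gFn_step (m j : ℕ) : gFn (3 * j + 3 + m) (j + 1) =
    rN ((3 * j + 3 + m : ℕ) : ℚ) j / rD ((3 * j + 3 + m : ℕ) : ℚ) j * gFn (3 * j + 3 + m) j := by
  have h0 := rD_pos m j
  have hA := gFn_fact m (j + 1)
  have hB := gFn_fact (m + 3) j
  rw [show 3 * (j + 1) + m = 3 * j + 3 + m by ring] at hA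
  rw [show 3 * j + (m + 3) = 3 * j + 3 + m by ring] at hB
  rw [hA, hB]
  rw [show 4 * (j + 1) + m = (4 * j + m + 3) + 1 by ring, show 4 * j + (m + 3) = 4 * j + m + 3 by ring,
    show 2 * j + (m + 3) = (2 * j + m + 2) + 1 by ring, show 2 * (j + 1) + m = 2 * j + m + 2 by ring,
    show 6 * (j + 1) + m = (6 * j + m + 3) + 1 + 1 + 1 by ring,
    show 6 * j + (m + 3) = 6 * j + m + 3 by ring, show m + 3 = m + 1 + 1 + 1 by ring]
  rw [Nat.factorial_succ (4 * j + m + 3), Nat.factorial_succ (2 * j + m + 2),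
    Nat.factorial_succ (6 * j + m + 3 + 1 + 1), Nat.factorial_succ (6 * j + m + 3 + 1),
    Nat.factorial_succ (6 * j + m + 3), Nat.factorial_succ (m + 1 + 1), Nat.factorial_succ (m + 1),
    Nat.factorial_succ m]
  have q1 : ((4 * j + m + 3)! : ℚ) ≠ 0 := by positivity
  have q2 : ((2 * j + m + 2)! : ℚ) ≠ 0 := by positivity
  have q3 : ((6 * j + m + 3)! : ℚ) ≠ 0 := by positivity
  have q4 : ((m)! : ℚ) ≠ 0 := by positivity
  rw [_root_.div_mul_div_comm, div_eq_div_iff (by positivity) (by positivity)]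
  unfold rN rD
  push_cast
  generalize ((4 * j + m + 3)! : ℚ) = A
  generalize ((2 * j + m + 2)! : ℚ) = B
  generalize ((6 * j + m + 3)! : ℚ) = C
  generalize ((m)! : ℚ) = M
  ring

lemma gFn_ge (l j : ℕ) (h : 3 * j ≤ l) : 1 ≤ gFn l j := by
  induction j with
  | zero => simp [gFn]
  | succ j ih =>
    obtain ⟨m, rfl⟩ := Nat.exists_eq_add_of_le h
    rw [show 3 * (j + 1) + m = 3 * j + 3 + m by ring] at *
    rw [gFn_step]
    have h1 := ih (by omega)
    have h2 : 1 ≤ rN ((3 * j + 3 + m : ℕ) : ℚ) j / rD ((3 * j + 3 + m : ℕ) : ℚ) j :=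
      (one_le_div (rD_pos m j)).2 (rD_le m j)
    nlinarith

/-- For every integer `l ≥ 6` and every integer `j` with `1 ≤ j ≤ ⌊l/3⌋ − 1`, the function
`d_l(j) = g_l(j) − h_l(j)` has strictly positive second-order finite differences:
`Δ²d_l(j) = d_l(j+1) − 2 d_l(j) + d_l(j−1) > 0`. -/
theorem stmt6 (l : ℕ) (hl : 6 ≤ l) (j : ℕ) (hj1 : 1 ≤ j) (hj2 : j ≤ l / 3 - 1) :
    0 < dFn l (j + 1) - 2 * dFn l j + dFn l (j - 1) := by
  obtain ⟨k, rfl⟩ := Nat.exists_eq_add_of_le' hj1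
  obtain ⟨m, rfl⟩ := Nat.exists_eq_add_of_le (show 3 * (k + 1) + 3 ≤ l by omega)
  have s1 := gFn_step m (k + 1)
  have s2 := gFn_step (m + 3) k
  have g1 := gFn_ge (3 * (k + 1) + 3 + m) (k + 1) (by omega)
  have g0 := gFn_ge (3 * (k + 1) + 3 + m) k (by omega)
  have d1 := rD_pos m (k + 1)
  have d0 := rD_pos (m + 3) k
  have n0 := rN_pos (m + 3) k
  rw [show 3 * k + 3 + (m + 3) = 3 * (k + 1) + 3 + m by ring] at s2 d0 n0
  have mp := main_poly m k ((3 * (k + 1) + 3 + m : ℕ) : ℚ) ((k + 1 : ℕ) : ℚ) (by push_cast; ring)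
    (by push_cast; ring)
  rw [show ((k + 1 : ℕ) : ℚ) - 1 = k by push_cast; ring] at mp
  have hl1 : ((k + 1 : ℕ) : ℚ) + 2 ≤ ((3 * (k + 1) + 3 + m : ℕ) : ℚ) := by
    exact_mod_cast (by omega : k + 1 + 2 ≤ 3 * (k + 1) + 3 + m)
  have hj0 : (0 : ℚ) ≤ ((k + 1 : ℕ) : ℚ) := Nat.cast_nonneg _
  simp only [dFn, hFn, Nat.add_sub_cancel]
  rw [show ((k + 1 + 1 : ℕ) : ℚ) = ((k + 1 : ℕ) : ℚ) + 1 by push_cast; ring,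
    show (k : ℚ) = ((k + 1 : ℕ) : ℚ) - 1 by push_cast; ring]
  rw [show (k : ℚ) = ((k + 1 : ℕ) : ℚ) - 1 by push_cast; ring] at mp s2 d0 n0
  generalize 3 * (k + 1) + 3 + m = l at *
  generalize gFn l (k + 1 + 1) = G2 at *
  generalize gFn l (k + 1) = G1 at *
  generalize gFn l k = G0 at *
  generalize ((k + 1 : ℕ) : ℚ) = j at *
  generalize (l : ℚ) = L at *
  generalize rN L j = N1 at *
  generalize rD L j = D1 at *
  generalize rN L (j - 1) = N0 at *
  generalize rD L (j - 1) = D0 at *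
  have hH : 0 < (L - j) * (L - j - 1) * (L - j + 1) := by
    have : 0 < L - j := by linarith
    have : 0 < L - j - 1 := by linarith
    positivity
  have hh : (L + (j + 1)) / (L - (j + 1)) - 2 * ((L + j) / (L - j)) + (L + (j - 1)) / (L - (j - 1))
      = 4 * L / ((L - j) * (L - j - 1) * (L - j + 1)) := by
    have a1 : L - j ≠ 0 := by intro h; linarith
    have a2 : L - j - 1 ≠ 0 := by intro h; linarith
    have a3 : L - j + 1 ≠ 0 := by intro h; linarith
    rw [show L - (j + 1) = L - j - 1 by ring, show L - (j - 1) = L - j + 1 by ring]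
    field_simp
    ring
  have key : 4 * L / ((L - j) * (L - j - 1) * (L - j + 1)) < N1 / D1 - N0 / D0 := by
    rw [div_sub_div _ _ d1.ne' d0.ne', div_lt_div_iff₀ hH (by positivity)]
    linarith
  have hb : 0 < N0 / D0 := by positivity
  generalize N1 / D1 = a at *
  generalize N0 / D0 = b at *
  have hpos : 0 < 4 * L / ((L - j) * (L - j - 1) * (L - j + 1)) :=
    div_pos (by linarith) hH
  have h5 : (2 - b) * G1 ≤ G0 := by
    rw [s2]
    nlinarith [mul_nonneg (by linarith : (0:ℚ) ≤ G0) (sq_nonneg (b - 1))]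
  have h6 : (a - b) * G1 ≤ G2 - 2 * G1 + G0 := by rw [s1]; linarith
  generalize 4 * L / ((L - j) * (L - j - 1) * (L - j + 1)) = t at *
  have h7 : t < (a - b) * G1 := by
    nlinarith
  linarith
end

section
/- Along positive integers a → ∞, with l = 4a², the following asymptotic expansions hold: log g_{4a²}(a+1) = 1/(2a) + 3/(2a²) + 47/(32a³) + 19/(32a⁴) + O(a^{−5}) and log h_{4a²}(a+1) = 1/(2a) + 1/(2a²) + 1/(96a³) + 1/(32a⁴) + O(a^{−5}). In particular, for all sufficiently large a, g_{4a²}(a+1) > h_{4a²}(a+1). -/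
open Filter Asymptotics

lemma aux_taylor {x : ℝ} (h : |x| ≤ 1/2) :
    |Real.log (1 + x) - (x - x^2/2 + x^3/3 - x^4/4 + x^5/5)| ≤ 2 * |x|^6 := by
  have h1 : |(-x)| < 1 := by rw [abs_neg]; linarith
  have := Real.abs_log_sub_add_sum_range_le h1 5
  simp only [Finset.sum_range_succ, Finset.sum_range_zero, abs_neg] at this
  have e : |x|^6 / (1 - |x|) ≤ 2 * |x|^6 := by
    rw [div_le_iff₀ (by linarith)]
    nlinarith [pow_nonneg (abs_nonneg x) 6]
  refine le_trans (le_of_eq ?_) (le_trans this e)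
  congr 1
  push_cast
  ring_nf

lemma aux_term {d s : ℝ} (hd : d ≤ 1/6) (hs : |s| ≤ d) :
    |2 * Real.log (1 + s) - Real.log (1 + (s + 2*d)) - Real.log (1 + (s - 2*d))
      - (4*d^2*(1 - 2*s + 3*s^2 - 4*s^3) + 8*d^4*(1 - 4*s))| ≤ 5840 * d^6 := by
  have hs' := abs_le.1 hs
  have d0 : 0 ≤ d := (abs_nonneg s).trans hs
  have key : ∀ x : ℝ, |x| ≤ 3*d →
      |Real.log (1 + x) - (x - x^2/2 + x^3/3 - x^4/4 + x^5/5)| ≤ 1458 * d^6 := by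
    intro x hx
    refine (aux_taylor (by linarith)).trans ?_
    have := pow_le_pow_left₀ (abs_nonneg x) hx 6
    nlinarith
  have a1 := aux_taylor (x := s) (by linarith)
  have p1 := pow_le_pow_left₀ (abs_nonneg s) hs 6
  have a2 := abs_le.1 (key (s + 2*d) (by rw [abs_le]; constructor <;> linarith))
  have a3 := abs_le.1 (key (s - 2*d) (by rw [abs_le]; constructor <;> linarith))
  have a1' := abs_le.1 (a1.trans (mul_le_mul_of_nonneg_left p1 (by norm_num)))
  have d6 := pow_nonneg d0 6
  have e : 4*d^2*(1 - 2*s + 3*s^2 - 4*s^3) + 8*d^4*(1 - 4*s)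
      = 2 * (s - s^2/2 + s^3/3 - s^4/4 + s^5/5)
      - ((s+2*d) - (s+2*d)^2/2 + (s+2*d)^3/3 - (s+2*d)^4/4 + (s+2*d)^5/5)
      - ((s-2*d) - (s-2*d)^2/2 + (s-2*d)^3/3 - (s-2*d)^4/4 + (s-2*d)^5/5) := by ring
  rw [e, abs_le]
  constructor <;> linarith [a1'.1, a1'.2, a2.1, a2.2, a3.1, a3.2]

lemma aux_sum (x : ℝ) (A B C D : ℝ) (n : ℕ) :
    ∑ i ∈ Finset.range n, (A + B * (x - i) + C * (x - i)^2 + D * (x - i)^3)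
     = A * n + B * (n * x - n*(n-1)/2) + C * (n * x^2 - x*n*(n-1) + (n-1)*n*(2*n-1)/6)
      + D * (n * x^3 - 3*x^2*(n*(n-1)/2) + 3*x*((n-1)*n*(2*n-1)/6) - (n*(n-1)/2)^2) := by
  induction n with
  | zero => simp
  | succ n ih => rw [Finset.sum_range_succ, ih]; push_cast; ring

lemma aux_desc (n k : ℕ) (h : k ≤ n) :
    ((Nat.descFactorial n k : ℕ) : ℝ) = ∏ i ∈ Finset.range k, ((n : ℝ) - i) := by
  rw [Nat.descFactorial_eq_prod_range, Nat.cast_prod]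
  refine Finset.prod_congr rfl fun i hi => ?_
  rw [Nat.cast_sub]
  have := Finset.mem_range.1 hi
  omega

lemma aux_log_desc (n k : ℕ) (h : k ≤ n) :
    Real.log ((Nat.descFactorial n k : ℕ) : ℝ) = ∑ i ∈ Finset.range k, Real.log ((n : ℝ) - i) := by
  rw [aux_desc n k h, Real.log_prod]
  intro i hi
  have := Finset.mem_range.1 hi
  have h2 : (i : ℝ) < n := by exact_mod_cast (by omega : i < n)
  linarith

lemma gpos (l j : ℕ) (h : 3 * j ≤ l) : 0 < gFn l j := by
  unfold gFn
  have h1 : 0 < Nat.descFactorial (l + j) (2 * j) := Nat.descFactorial_pos.2 (by omega)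
  have h2 : 0 < Nat.descFactorial (l + 3 * j) (2 * j) := Nat.descFactorial_pos.2 (by omega)
  have h3 : 0 < Nat.descFactorial (l - j) (2 * j) := Nat.descFactorial_pos.2 (by omega)
  positivity

lemma log_g (l j : ℕ) (hj : 0 < j) (h : 3 * j ≤ l) :
    Real.log ((gFn l j : ℚ) : ℝ) = ∑ i ∈ Finset.range (2 * j),
      (2 * Real.log (1 + ((j : ℝ) - i) / l) - Real.log (1 + (((j : ℝ) - i) / l + 2 * ((j : ℝ) / l)))
        - Real.log (1 + (((j : ℝ) - i) / l - 2 * ((j : ℝ) / l)))) := by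
  have h1 : 0 < Nat.descFactorial (l + j) (2 * j) := Nat.descFactorial_pos.2 (by omega)
  have h2 : 0 < Nat.descFactorial (l + 3 * j) (2 * j) := Nat.descFactorial_pos.2 (by omega)
  have h3 : 0 < Nat.descFactorial (l - j) (2 * j) := Nat.descFactorial_pos.2 (by omega)
  have h1' : (0:ℝ) < Nat.descFactorial (l + j) (2 * j) := by exact_mod_cast h1
  have h2' : (0:ℝ) < Nat.descFactorial (l + 3 * j) (2 * j) := by exact_mod_cast h2
  have h3' : (0:ℝ) < Nat.descFactorial (l - j) (2 * j) := by exact_mod_cast h3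
  unfold gFn
  push_cast
  rw [Real.log_div (by positivity) (by positivity), Real.log_pow, Real.log_mul h2'.ne' h3'.ne',
    aux_log_desc _ _ (by omega), aux_log_desc _ _ (by omega), aux_log_desc _ _ (by omega),
    ← Finset.sum_add_distrib, Finset.mul_sum, ← Finset.sum_sub_distrib]
  refine Finset.sum_congr rfl fun i hi => ?_
  have hi' := Finset.mem_range.1 hi
  have hir : (i : ℝ) < 2 * j := by exact_mod_cast hi'
  have hlr : 3 * (j : ℝ) ≤ l := by exact_mod_cast h
  have hjr : (0:ℝ) < j := by exact_mod_cast hj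
  have hl : (0:ℝ) < l := by linarith
  rw [Nat.cast_sub (by omega : j ≤ l)]
  have e1 : 1 + ((j : ℝ) - i) / l = (l + j - i) / l := by field_simp; ring
  have e2 : 1 + (((j : ℝ) - i) / l + 2 * ((j : ℝ) / l)) = (l + 3 * j - i) / l := by
    field_simp; ring
  have e3 : 1 + (((j : ℝ) - i) / l - 2 * ((j : ℝ) / l)) = (l - j - i) / l := by
    field_simp; ring
  rw [e1, e2, e3, Real.log_div (by linarith) hl.ne', Real.log_div (by linarith) hl.ne',
    Real.log_div (by linarith) hl.ne']
  push_cast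
  ring

lemma g_bound (a : ℕ) (ha : 10 ≤ a) :
    |Real.log ((gFn (4 * a ^ 2) (a + 1) : ℚ) : ℝ)
        - (1 / (2 * (a : ℝ)) + 3 / (2 * (a : ℝ) ^ 2) + 47 / (32 * (a : ℝ) ^ 3)
            + 19 / (32 * (a : ℝ) ^ 4))| ≤ 1000 * (1 / (a : ℝ) ^ 5) := by
  have har : (10:ℝ) ≤ a := by exact_mod_cast ha
  have ha0 : (0:ℝ) < a := by linarith
  obtain ⟨t, ht⟩ : ∃ t : ℝ, t = 1 / a := ⟨_, rfl⟩
  have t0 : 0 < t := by rw [ht]; positivity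
  have t1 : t ≤ 1/10 := by rw [ht]; exact one_div_le_one_div_of_le (by norm_num) har
  have hat : (a : ℝ) = 1 / t := by rw [ht]; simp
  obtain ⟨d, hd⟩ : ∃ d : ℝ, d = t * (1 + t) / 4 := ⟨_, rfl⟩
  have d0 : 0 < d := by rw [hd]; positivity
  have d1 : d ≤ t * (11/40) := by rw [hd]; nlinarith
  rw [log_g _ _ (by omega) (by nlinarith)]
  have hjl : (((a + 1 : ℕ) : ℝ) / ((4 * a ^ 2 : ℕ) : ℝ)) = d := by
    push_cast; rw [hd, hat]; field_simp
  have hs : ∀ i : ℕ, (((a + 1 : ℕ) : ℝ) - i) / ((4 * a ^ 2 : ℕ) : ℝ)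
      = (((a + 1 : ℕ) : ℝ) - i) * (t^2/4) := by
    intro i; push_cast; rw [hat]; field_simp
  have hsb : ∀ i ∈ Finset.range (2 * (a + 1)),
      |(((a + 1 : ℕ) : ℝ) - i) / ((4 * a ^ 2 : ℕ) : ℝ)| ≤ d := by
    intro i hi
    have hir : (i : ℝ) < 2 * ((a + 1 : ℕ) : ℝ) := by exact_mod_cast Finset.mem_range.1 hi
    have hi0 : (0:ℝ) ≤ i := Nat.cast_nonneg i
    rw [← hjl, abs_div, abs_of_nonneg (Nat.cast_nonneg (4 * a^2) : (0:ℝ) ≤ ((4 * a^2 : ℕ) : ℝ))]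
    refine div_le_div_of_nonneg_right ?_ (Nat.cast_nonneg _)
    rw [abs_le]; constructor <;> linarith
  have hsum : ∑ i ∈ Finset.range (2 * (a + 1)),
      (4*d^2*(1 - 2*((((a + 1 : ℕ) : ℝ) - i) / ((4 * a ^ 2 : ℕ) : ℝ))
        + 3*((((a + 1 : ℕ) : ℝ) - i) / ((4 * a ^ 2 : ℕ) : ℝ))^2
        - 4*((((a + 1 : ℕ) : ℝ) - i) / ((4 * a ^ 2 : ℕ) : ℝ))^3)
        + 8*d^4*(1 - 4*((((a + 1 : ℕ) : ℝ) - i) / ((4 * a ^ 2 : ℕ) : ℝ))))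
      = (1 / (2 * (a : ℝ)) + 3 / (2 * (a : ℝ) ^ 2) + 47 / (32 * (a : ℝ) ^ 3)
            + 19 / (32 * (a : ℝ) ^ 4)) + t^5 * (-(3+t)/8 + 3/32*(10+10*t+5*t^2+t^3)
            + (1+t)^3/64 - 3*(1+t)^5/64) := by
    have := aux_sum ((a + 1 : ℕ) : ℝ) (4*d^2 + 8*d^4) (-8*d^2*(t^2/4) - 32*d^4*(t^2/4))
      (12*d^2*(t^2/4)^2) (-16*d^2*(t^2/4)^3) (2 * (a + 1))
    refine Eq.trans (Finset.sum_congr rfl fun i _ => ?_) (this.trans ?_)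
    · rw [hs i]; ring
    · push_cast; rw [hd, hat]; field_simp; ring
  have herr := Finset.sum_le_sum (fun i hi => aux_term (by linarith) (hsb i hi))
  have herr2 := (Finset.abs_sum_le_sum_abs _ _).trans herr
  rw [Finset.sum_sub_distrib, hsum, Finset.sum_const, Finset.card_range, nsmul_eq_mul] at herr2
  rw [hjl]
  have hE : ((2 * (a + 1) : ℕ) : ℝ) * (5840 * d^6) ≤ 900 * t^5 := by
    have p := pow_le_pow_left₀ d0.le d1 6
    have q : ((2 * (a + 1) : ℕ) : ℝ) * t ≤ 11/5 := by
      push_cast; rw [hat]; field_simp; linarith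
    calc ((2 * (a + 1) : ℕ) : ℝ) * (5840 * d^6)
        ≤ ((2 * (a + 1) : ℕ) : ℝ) * (5840 * (t * (11/40))^6) := by gcongr
      _ = (((2 * (a + 1) : ℕ) : ℝ) * t) * (t^5 * (5840 * (11/40)^6)) := by ring
      _ ≤ (11/5) * (t^5 * (5840 * (11/40)^6)) := by gcongr
      _ ≤ 900 * t^5 := by nlinarith [pow_pos t0 5]
  have hR : |t^5 * (-(3+t)/8 + 3/32*(10+10*t+5*t^2+t^3)
            + (1+t)^3/64 - 3*(1+t)^5/64)| ≤ t^5 * 100 := by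
    rw [abs_mul, abs_of_pos (pow_pos t0 5)]
    refine mul_le_mul_of_nonneg_left ?_ (by positivity)
    have b2 : t^2 ≤ 1 := pow_le_one₀ t0.le (by linarith)
    have b3 : t^3 ≤ 1 := pow_le_one₀ t0.le (by linarith)
    have c3 : (1+t)^3 ≤ 2^3 := pow_le_pow_left₀ (by linarith) (by linarith) 3
    have c5 : (1+t)^5 ≤ 2^5 := pow_le_pow_left₀ (by linarith) (by linarith) 5
    have : 0 ≤ t^2 := by positivity
    have : 0 ≤ t^3 := by positivity
    have : 0 ≤ (1+t)^3 := by positivity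
    have : 0 ≤ (1+t)^5 := by positivity
    rw [abs_le]; constructor <;> linarith
  have ht5 : 1 / (a:ℝ)^5 = t^5 := by rw [ht]; simp
  rw [ht5]
  have x1 := abs_le.1 (herr2.trans hE)
  have x2 := abs_le.1 hR
  rw [abs_le]
  constructor <;> linarith [x1.1, x1.2, x2.1, x2.2]

lemma h_bound (a : ℕ) (ha : 10 ≤ a) :
    |Real.log ((hFn (4 * a ^ 2) (a + 1) : ℚ) : ℝ)
        - (1 / (2 * (a : ℝ)) + 1 / (2 * (a : ℝ) ^ 2) + 1 / (96 * (a : ℝ) ^ 3)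
            + 1 / (32 * (a : ℝ) ^ 4))| ≤ 1000 * (1 / (a : ℝ) ^ 5) := by
  have har : (10:ℝ) ≤ a := by exact_mod_cast ha
  have ha0 : (0:ℝ) < a := by linarith
  obtain ⟨t, ht⟩ : ∃ t : ℝ, t = 1 / a := ⟨_, rfl⟩
  have t0 : 0 < t := by rw [ht]; positivity
  have t1 : t ≤ 1/10 := by rw [ht]; exact one_div_le_one_div_of_le (by norm_num) har
  have hat : (a : ℝ) = 1 / t := by rw [ht]; simp
  obtain ⟨d, hd⟩ : ∃ d : ℝ, d = t * (1 + t) / 4 := ⟨_, rfl⟩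
  have d0 : 0 < d := by rw [hd]; positivity
  have d1 : d ≤ t := by rw [hd]; nlinarith
  have hh : ((hFn (4 * a ^ 2) (a + 1) : ℚ) : ℝ) = (1 + d) / (1 + -d) := by
    have n1 : (4 * (a:ℝ)^2 - (a + 1)) ≠ 0 := by nlinarith
    have n2 : (1 + -d) ≠ 0 := by linarith
    have hda : d = (a + 1) / (4 * (a:ℝ)^2) := by rw [hd, hat]; field_simp
    unfold hFn
    push_cast
    rw [div_eq_div_iff n1 n2, hda]
    field_simp
    ring
  rw [hh, Real.log_div (by linarith) (by linarith)]
  have hdabs : |d| = d := abs_of_pos d0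
  have a1 := aux_taylor (x := d) (by rw [hdabs]; linarith)
  have a2 := aux_taylor (x := -d) (by rw [abs_neg, hdabs]; linarith)
  rw [abs_neg] at a2
  rw [hdabs] at a1 a2
  have p : d^6 ≤ t^5 := by
    calc d^6 ≤ t^6 := pow_le_pow_left₀ d0.le d1 6
      _ = t^5 * t := by ring
      _ ≤ t^5 * 1 := by gcongr; linarith
      _ = t^5 := by ring
  have hsum : (d - d^2/2 + d^3/3 - d^4/4 + d^5/5)
      - (-d - (-d)^2/2 + (-d)^3/3 - (-d)^4/4 + (-d)^5/5)
      = (1 / (2 * (a : ℝ)) + 1 / (2 * (a : ℝ) ^ 2) + 1 / (96 * (a : ℝ) ^ 3)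
            + 1 / (32 * (a : ℝ) ^ 4)) + t^5 * ((3+t)/96 + (1+t)^5/2560) := by
    rw [hd, hat]; field_simp; ring
  have hR : |t^5 * ((3+t)/96 + (1+t)^5/2560)| ≤ t^5 * 100 := by
    rw [abs_mul, abs_of_pos (pow_pos t0 5)]
    refine mul_le_mul_of_nonneg_left ?_ (by positivity)
    have c5 : (1+t)^5 ≤ 2^5 := pow_le_pow_left₀ (by linarith) (by linarith) 5
    have : 0 ≤ (1+t)^5 := by positivity
    rw [abs_le]; constructor <;> linarith
  have ht5 : 1 / (a:ℝ)^5 = t^5 := by rw [ht]; simp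
  rw [ht5]
  have t5 := pow_pos t0 5
  have x1 := abs_le.1 a1
  have x3 := abs_le.1 a2
  have x2 := abs_le.1 hR
  rw [abs_le]
  constructor <;> linarith [x1.1, x1.2, x2.1, x2.2, x3.1, x3.2]

lemma hpos (a : ℕ) (ha : 10 ≤ a) : 0 < hFn (4 * a ^ 2) (a + 1) := by
  have har : (10:ℚ) ≤ a := by exact_mod_cast ha
  unfold hFn
  push_cast
  apply div_pos <;> nlinarith

/-- Along positive integers `a → ∞`, with `l = 4a²`:
`log g_{4a²}(a+1) = 1/(2a) + 3/(2a²) + 47/(32a³) + 19/(32a⁴) + O(a⁻⁵)` and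
`log h_{4a²}(a+1) = 1/(2a) + 1/(2a²) + 1/(96a³) + 1/(32a⁴) + O(a⁻⁵)`;
in particular `g_{4a²}(a+1) > h_{4a²}(a+1)` for all sufficiently large `a`. -/
theorem stmt11 :
    (fun a : ℕ => Real.log ((gFn (4 * a ^ 2) (a + 1) : ℚ) : ℝ)
        - (1 / (2 * (a : ℝ)) + 3 / (2 * (a : ℝ) ^ 2) + 47 / (32 * (a : ℝ) ^ 3)
            + 19 / (32 * (a : ℝ) ^ 4)))
      =O[atTop] (fun a : ℕ => 1 / (a : ℝ) ^ 5) ∧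
    (fun a : ℕ => Real.log ((hFn (4 * a ^ 2) (a + 1) : ℚ) : ℝ)
        - (1 / (2 * (a : ℝ)) + 1 / (2 * (a : ℝ) ^ 2) + 1 / (96 * (a : ℝ) ^ 3)
            + 1 / (32 * (a : ℝ) ^ 4)))
      =O[atTop] (fun a : ℕ => 1 / (a : ℝ) ^ 5) ∧
    (∀ᶠ a : ℕ in atTop, hFn (4 * a ^ 2) (a + 1) < gFn (4 * a ^ 2) (a + 1)) := by
  refine ⟨?_, ?_, ?_⟩
  · refine IsBigO.of_bound 1000 ?_
    filter_upwards [eventually_ge_atTop 10] with a ha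
    rw [Real.norm_eq_abs, Real.norm_eq_abs, abs_of_nonneg (by positivity : 0 ≤ 1 / (a:ℝ)^5)]
    exact g_bound a ha
  · refine IsBigO.of_bound 1000 ?_
    filter_upwards [eventually_ge_atTop 10] with a ha
    rw [Real.norm_eq_abs, Real.norm_eq_abs, abs_of_nonneg (by positivity : 0 ≤ 1 / (a:ℝ)^5)]
    exact h_bound a ha
  · filter_upwards [eventually_ge_atTop 100] with a ha
    have har : (100:ℝ) ≤ a := by exact_mod_cast ha
    have ha0 : (0:ℝ) < a := by linarith
    have hg := (abs_le.1 (g_bound a (by omega))).1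
    have hh := (abs_le.1 (h_bound a (by omega))).2
    have gp := gpos (4 * a ^ 2) (a + 1) (by nlinarith)
    have hp := hpos a (by omega)
    have k : 2000 * (1 / (a : ℝ)^5) < 1 / (a:ℝ)^2 := by
      rw [mul_one_div, div_lt_div_iff₀ (by positivity) (by positivity)]
      have : (100:ℝ)^3 ≤ (a:ℝ)^3 := pow_le_pow_left₀ (by norm_num) har 3
      have h2 : 0 < (a:ℝ)^2 := by positivity
      nlinarith
    have k2 : 3 / (2 * (a : ℝ) ^ 2) = 1 / (2 * (a : ℝ) ^ 2) + 1 / (a:ℝ)^2 := by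
      field_simp; norm_num
    have k3 : 1 / (96 * (a : ℝ) ^ 3) ≤ 47 / (32 * (a : ℝ) ^ 3) := by
      apply div_le_div₀ (by norm_num) (by norm_num) (by positivity)
      have : 0 < (a:ℝ)^3 := by positivity
      linarith
    have k4 : 1 / (32 * (a : ℝ) ^ 4) ≤ 19 / (32 * (a : ℝ) ^ 4) := by
      gcongr; norm_num
    have hlt : Real.log ((hFn (4 * a ^ 2) (a + 1) : ℚ) : ℝ)
        < Real.log ((gFn (4 * a ^ 2) (a + 1) : ℚ) : ℝ) := by linarith
    have := (Real.log_lt_log_iff (by exact_mod_cast hp) (by exact_mod_cast gp)).1 hlt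
    exact_mod_cast this
end
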